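/- arXiv:2510.04993 — 2 statements merged into one kernel-verified Lean document; each statement's English description precedes it below -/
import Mathlib

section
/- For any permutation gate π ∈ 𝒞₃ on n qubits there exist Clifford permutation gates φ₁, φ₂ such that τ = φ₁ π φ₂ satisfies: τ(0) = 0; τ(eᵢ) = eᵢ for every i ∈ [n]; and for every i ∈ [n] the gate τ Xᵢ τ⁻¹ acts on basis states by v ↦ v + Aᵢv + eᵢ for some strictly lower triangular n×n matrix Aᵢ over 𝔽₂, where Xᵢ is the permutation gate v ↦ v + eᵢ. -/
/-! Common framework: qubit gates, the Pauli group, the Clifford hierarchy,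
permutation gates, Toffoli gates and staircase form, descending multiplications,
multilinear polynomial representations. -/

/-- Vectors in `𝔽₂ⁿ`, indexing computational basis states. -/
abbrev QV (n : ℕ) := Fin n → ZMod 2

/-- `n`-qubit gates: `2ⁿ × 2ⁿ` complex matrices indexed by `𝔽₂ⁿ`. -/
abbrev QMat (n : ℕ) := Matrix (QV n) (QV n) ℂ

/-- Standard basis vector `eᵢ` of `𝔽₂ⁿ`. -/
def stdBasis (n : ℕ) (i : Fin n) : QV n := fun m => if m = i then 1 else 0

/-- The gate `X^u Z^z`, sending `|b⟩` to `(-1)^(z·b) |b+u⟩`. -/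
noncomputable def XZGate (n : ℕ) (u z : QV n) : QMat n :=
  fun a b => if a = b + u then (-1 : ℂ) ^ (∑ i, (z i).val * (b i).val) else 0

/-- The Pauli group on `n` qubits: gates `c·P₁⊗⋯⊗Pₙ`, `c ∈ {±1, ±i}`,
`Pᵢ ∈ {I,X,Y,Z}`, equivalently phases times `X^u Z^z`. -/
def PauliGroup (n : ℕ) : Set (QMat n) :=
  { P | ∃ (c : ℂ) (u z : QV n),
      (c = 1 ∨ c = -1 ∨ c = Complex.I ∨ c = -Complex.I) ∧ P = c • XZGate n u z }

/-- Level `k` of the Clifford hierarchy `𝒞ₖ` (level 1 is the Pauli group,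
level 2 the Clifford group; level 0 is junk/empty). -/
def CliffordLevel (n : ℕ) : ℕ → Set (QMat n)
  | 0 => ∅
  | 1 => PauliGroup n
  | (k+2) => { U | U ∈ Matrix.unitaryGroup (QV n) ℂ ∧
      ∀ P ∈ PauliGroup n, U * P * star U ∈ CliffordLevel n (k+1) }

/-- The permutation gate of a permutation `f` of `𝔽₂ⁿ`: sends `|v⟩` to `|f v⟩`. -/
noncomputable def permGate (n : ℕ) (f : QV n ≃ QV n) : QMat n :=
  fun a b => if a = f b then 1 else 0

/-- A diagonal gate. -/
def IsDiagonal (n : ℕ) (d : QMat n) : Prop := ∀ a b : QV n, a ≠ b → d a b = 0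

/-- A gate is semi-Clifford if it equals `φ₁ d φ₂` for Clifford `φ₁, φ₂` and diagonal `d`. -/
def IsSemiClifford (n : ℕ) (U : QMat n) : Prop :=
  ∃ φ₁ d φ₂ : QMat n, φ₁ ∈ CliffordLevel n 2 ∧ φ₂ ∈ CliffordLevel n 2 ∧
    IsDiagonal n d ∧ U = φ₁ * d * φ₂

/-- The underlying map of the Toffoli gate `TOF_{i,j,k}`: `v ↦ v + (vᵢvⱼ)·eₖ`. -/
def tofFun (n : ℕ) (i j k : Fin n) (v : QV n) : QV n :=
  fun m => if m = k then v m + v i * v j else v m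

/-- A map on `𝔽₂ⁿ` is in staircase form if it is a product (applied left-to-right)
of pairwise distinct Toffoli gates `TOF_{i,j,k}` with `i<j<k` and with targets
nondecreasing in the order the gates are applied. -/
def IsStaircase (n : ℕ) (g : QV n → QV n) : Prop :=
  ∃ L : List (Fin n × Fin n × Fin n),
    L.Nodup ∧
    (∀ t ∈ L, t.1 < t.2.1 ∧ t.2.1 < t.2.2) ∧
    List.Chain' (fun s t => s.2.2 ≤ t.2.2) L ∧
    g = fun v => L.foldl (fun w t => tofFun n t.1 t.2.1 t.2.2 w) v

/-- A descending multiplication on `𝔽₂ⁿ`: bilinear, associative, commutative,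
`eᵢeᵢ = 0`, and for `i < j`, `eᵢeⱼ ∈ span{eₖ : k > j}`. -/
def IsDescendingMul (n : ℕ) (mul : QV n → QV n → QV n) : Prop :=
  (∀ u v w : QV n, mul (u + v) w = mul u w + mul v w) ∧
  (∀ u v w : QV n, mul u (v + w) = mul u v + mul u w) ∧
  (∀ u v w : QV n, mul (mul u v) w = mul u (mul v w)) ∧
  (∀ u v : QV n, mul u v = mul v u) ∧
  (∀ i : Fin n, mul (stdBasis n i) (stdBasis n i) = 0) ∧
  (∀ i j : Fin n, i < j → ∀ m : Fin n, m ≤ j → mul (stdBasis n i) (stdBasis n j) m = 0)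

/-- The product `∏_{i ∈ l} eᵢ` under a multiplication, for a list `l` (junk `0` on `[]`). -/
def dmProdList (n : ℕ) (mul : QV n → QV n → QV n) : List (Fin n) → QV n
  | [] => 0
  | [i] => stdBasis n i
  | i :: j :: rest => mul (stdBasis n i) (dmProdList n mul (j :: rest))

/-- The product `∏_{i ∈ T} eᵢ` under a multiplication. -/
def dmProd (n : ℕ) (mul : QV n → QV n → QV n) (T : Finset (Fin n)) : QV n :=
  dmProdList n mul (T.sort (· ≤ ·))

/-- `g` is the map `∑_{i∈S} eᵢ ↦ ∑_{∅≠T⊆S} ∏_{i∈T} eᵢ` associated to a multiplication. -/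
def dmPiSpec (n : ℕ) (mul : QV n → QV n → QV n) (g : QV n → QV n) : Prop :=
  ∀ S : Finset (Fin n),
    g (∑ i ∈ S, stdBasis n i) = ∑ T ∈ S.powerset.erase ∅, dmProd n mul T

/-- The bilinear extension of `eᵢeⱼ := g(eᵢ+eⱼ) + eᵢ + eⱼ`. -/
def inducedMul (n : ℕ) (g : QV n → QV n) (u v : QV n) : QV n :=
  ∑ i : Fin n, ∑ j : Fin n,
    (u i * v j) • (g (stdBasis n i + stdBasis n j) + stdBasis n i + stdBasis n j)

/-- Coefficient of the monomial `∏_{i∈T} aᵢ` in the unique multilinear polynomial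
over `𝔽₂` representing `g : 𝔽₂ⁿ → 𝔽₂` (Möbius inversion over `𝔽₂`). -/
def mlCoeff (n : ℕ) (g : QV n → ZMod 2) (T : Finset (Fin n)) : ZMod 2 :=
  ∑ R ∈ T.powerset, g (∑ i ∈ R, stdBasis n i)

/-- Strictly lower triangular matrix. -/
def StrictLowerTri (n : ℕ) (A : Matrix (Fin n) (Fin n) (ZMod 2)) : Prop :=
  ∀ p q : Fin n, p ≤ q → A p q = 0

/-- Multiplication of basis vectors for the gate `U_k`: the basis of `𝔽₂^(2^k-1)` is
indexed by nonempty subsets `S ⊆ [k]`, encoded as indices `a` via the binary digits of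
`a+1`; `e_S e_T = e_{S∪T}` if `S ∩ T = ∅` and `e_S e_T = 0` otherwise. -/
def ukBasisMul (k : ℕ) (a b : Fin (2 ^ k - 1)) : QV (2 ^ k - 1) :=
  if (a.val + 1) &&& (b.val + 1) = 0 then
    (if h : a.val + b.val + 1 < 2 ^ k - 1 then stdBasis (2 ^ k - 1) ⟨a.val + b.val + 1, h⟩
     else 0)
  else 0

/-- The descending multiplication defining `U_k`, extended bilinearly. -/
def ukMul (k : ℕ) (u v : QV (2 ^ k - 1)) : QV (2 ^ k - 1) :=
  ∑ a : Fin (2 ^ k - 1), ∑ b : Fin (2 ^ k - 1), (u a * v b) • ukBasisMul k a b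

lemma permGate_conj (n : ℕ) (f : QV n ≃ QV n) (M : QMat n) (a b : QV n) :
    (permGate n f * M * star (permGate n f)) a b = M (f.symm a) (f.symm b) := by
  have h1 : ∀ c, (permGate n f * M) a c = M (f.symm a) c := by
    intro c
    rw [Matrix.mul_apply, Finset.sum_eq_single (f.symm a)]
    · simp [permGate]
    · intro x _ hx
      have : a ≠ f x := fun h => hx (by simp [h])
      simp [permGate, this]
    · simp
  rw [Matrix.mul_apply, Finset.sum_eq_single (f.symm b)]
  · rw [h1]; simp [permGate, Matrix.star_apply]
  · intro x _ hx
    have : b ≠ f x := fun h => hx (by simp [h])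
    simp [permGate, Matrix.star_apply, this]
  · simp

lemma permGate_unitary (n : ℕ) (f : QV n ≃ QV n) :
    permGate n f ∈ Matrix.unitaryGroup (QV n) ℂ := by
  rw [Matrix.mem_unitaryGroup_iff]
  have := permGate_conj n f 1
  rw [mul_one] at this
  ext a b
  rw [this]
  simp [Matrix.one_apply]

lemma XZ_zero (n : ℕ) (u a b : QV n) : XZGate n u 0 a b = if a = b + u then 1 else 0 := by
  simp [XZGate]

lemma XZ_mem (n : ℕ) (u z : QV n) : XZGate n u z ∈ PauliGroup n :=
  ⟨1, u, z, Or.inl rfl, by simp⟩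

lemma affine_of_clifford (n : ℕ) (g : QV n ≃ QV n) (hg : permGate n g ∈ CliffordLevel n 2) :
    ∀ x, ∃ t, ∀ w, g (w + x) = g w + t := by
  intro x
  obtain ⟨c, u, z, hc, h⟩ := hg.2 _ (XZ_mem n x 0)
  refine ⟨u, fun w => ?_⟩
  have h2 := congrFun (congrFun h (g (w + x))) (g w)
  rw [permGate_conj, XZ_zero] at h2
  by_contra hne
  simp [XZGate, hne] at h2

lemma conj_clifford (n : ℕ) (f : QV n ≃ QV n) (hf : permGate n f ∈ CliffordLevel n 3) (u : QV n) :
    permGate n ((f.symm.trans (Equiv.addRight u)).trans f) ∈ CliffordLevel n 2 := by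
  have h := hf.2 _ (XZ_mem n u 0)
  convert h using 1
  ext a b
  rw [permGate_conj, XZ_zero]
  simp only [permGate, Equiv.trans_apply, Equiv.coe_addRight]
  congr 1
  rw [eq_iff_iff, Equiv.symm_apply_eq]

/-- the sign character of the two-element field -/
noncomputable def sgn (s : ZMod 2) : ℂ := (-1) ^ s.val

lemma sgn_add (s t : ZMod 2) : sgn (s + t) = sgn s * sgn t := by
  unfold sgn
  rw [ZMod.val_add, ← pow_add, ← neg_one_pow_eq_pow_mod_two]

lemma XZ_sgn (n : ℕ) (u z a b : QV n) :
    XZGate n u z a b = if a = b + u then sgn (z ⬝ᵥ b) else 0 := by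
  unfold XZGate sgn
  congr 1
  rw [neg_one_pow_eq_pow_mod_two]
  congr 1
  rw [← ZMod.val_natCast]
  congr 1
  simp [dotProduct]

lemma clifford_of_affine (n : ℕ) (T : QV n ≃ₗ[ZMod 2] QV n) (c : QV n) (g : QV n ≃ QV n)
    (hg : ∀ v, g v = T v + c) : permGate n g ∈ CliffordLevel n 2 := by
  refine ⟨permGate_unitary n g, ?_⟩
  rintro P ⟨k, u, z, hk, rfl⟩
  have hs : ∀ v, g.symm v = T.symm v + T.symm c := by
    intro v
    rw [Equiv.symm_apply_eq, hg]
    have : c + c = 0 := by ext i; exact CharTwo.add_self_eq_zero _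
    simp [add_assoc, this]
  obtain ⟨z', hz'⟩ : ∃ z' : QV n, ∀ b, z ⬝ᵥ T.symm b = z' ⬝ᵥ b := by
    refine ⟨Matrix.vecMul z (LinearMap.toMatrix' T.symm.toLinearMap), fun b => ?_⟩
    rw [← Matrix.dotProduct_mulVec, LinearMap.toMatrix'_mulVec]
    rfl
  refine ⟨k * sgn (z ⬝ᵥ T.symm c), T u, z', ?_, ?_⟩
  · have : ∀ s : ZMod 2, sgn s = 1 ∨ sgn s = -1 := fun s => neg_one_pow_eq_or _ _
    rcases this (z ⬝ᵥ T.symm c) with h | h <;> rw [h] <;>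
      rcases hk with rfl | rfl | rfl | rfl <;> simp
  · ext a b
    rw [permGate_conj]
    simp only [Matrix.smul_apply, smul_eq_mul, XZ_sgn]
    rw [hs, hs, dotProduct_add, sgn_add, hz']
    have : (T.symm a + T.symm c = T.symm b + T.symm c + u) ↔ a = b + T u := by
      rw [add_right_comm, add_left_inj, LinearEquiv.symm_apply_eq]; simp
    simp only [this]
    split_ifs <;> ring

/-- linear part and shift of a conjugated translation -/
lemma exists_lin (n : ℕ) (f : QV n ≃ QV n) (hf : permGate n f ∈ CliffordLevel n 3) (u : QV n) :
    ∃ t : QV n →ₗ[ZMod 2] QV n, ∀ v, f (f.symm v + u) = t v + f (f.symm 0 + u) := by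
  obtain ht := affine_of_clifford n _ (conj_clifford n f hf u)
  choose t ht using ht
  simp only [Equiv.trans_apply, Equiv.coe_addRight] at ht
  have hadd : ∀ x y, t (x + y) = t x + t y := by
    intro x y
    have h1 := ht (x + y) 0
    rw [← add_assoc, ht, ht, add_assoc] at h1
    exact (add_left_cancel h1).symm
  refine ⟨(AddMonoidHom.mk' t hadd).toZModLinearMap 2, fun v => ?_⟩
  have := ht v 0
  rw [zero_add] at this
  rw [this, add_comm]
  rfl

lemma exists_killed {V ι : Type*} [AddCommGroup V] [Module (ZMod 2) V] [Fintype ι]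
    (N : ι → V →ₗ[ZMod 2] V) (hsq : ∀ u v, N u (N u v) = 0)
    (hc : ∀ u u' v, N u (N u' v) = N u' (N u v)) (W : Submodule (ZMod 2) V)
    (hW : ∀ u, ∀ w ∈ W, N u w ∈ W) (hne : W ≠ ⊤) : ∃ w, w ∉ W ∧ ∀ u, N u w ∈ W := by
  classical
  have : ∀ S : Finset ι, ∃ w, w ∉ W ∧ ∀ u ∈ S, N u w ∈ W := by
    intro S
    induction S using Finset.induction_on with
    | empty =>
      obtain ⟨w, hw⟩ := SetLike.exists_not_mem_of_ne_top W hne rfl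
      exact ⟨w, hw, by simp⟩
    | insert a S ha ih =>
      obtain ⟨w, hw, h⟩ := ih
      by_cases hwa : N a w ∈ W
      · exact ⟨w, hw, by simpa using ⟨hwa, h⟩⟩
      · refine ⟨N a w, hwa, ?_⟩
        intro u hu
        rcases Finset.mem_insert.1 hu with rfl | hu
        · rw [hsq]; exact W.zero_mem
        · rw [hc]; exact hW _ _ (h u hu)
  obtain ⟨w, hw, h⟩ := this Finset.univ
  exact ⟨w, hw, fun u => h u (Finset.mem_univ u)⟩

lemma exists_flag {V ι : Type*} [AddCommGroup V] [Module (ZMod 2) V] [Fintype ι]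
    [FiniteDimensional (ZMod 2) V]
    (N : ι → V →ₗ[ZMod 2] V) (hsq : ∀ u v, N u (N u v) = 0)
    (hc : ∀ u u' v, N u (N u' v) = N u' (N u v)) (k : ℕ) (hk : k ≤ Module.finrank (ZMod 2) V) :
    ∃ w : Fin k → V, LinearIndependent (ZMod 2) w ∧
      ∀ u q, N u (w q) ∈ Submodule.span (ZMod 2) (w '' Set.Ioi q) := by
  induction k with
  | zero => exact ⟨Fin.elim0, linearIndependent_empty_type, fun u q => q.elim0⟩
  | succ k ih =>
    obtain ⟨w, hw, h⟩ := ih (by omega)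
    obtain ⟨x, hx, hx'⟩ := exists_killed N hsq hc (Submodule.span (ZMod 2) (Set.range w)) (by
      intro u y hy
      have : Submodule.span (ZMod 2) (Set.range w) ≤
          (Submodule.span (ZMod 2) (Set.range w)).comap (N u) := by
        rw [Submodule.span_le]
        rintro _ ⟨q, rfl⟩
        exact Submodule.span_mono (Set.image_subset_range _ _) (h u q)
      exact this hy) (by
      intro htop
      have h1 := finrank_span_eq_card hw
      rw [htop, finrank_top, Fintype.card_fin] at h1
      omega)
    refine ⟨Fin.cons x w, linearIndependent_finCons.2 ⟨hw, hx⟩, ?_⟩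
    intro u q
    refine Fin.cases ?_ ?_ q
    · refine Submodule.span_mono ?_ (hx' u)
      rintro _ ⟨p, rfl⟩
      exact ⟨p.succ, Fin.succ_pos p, by simp⟩
    · intro q
      rw [Fin.cons_succ]
      refine Submodule.span_mono ?_ (h u q)
      rintro _ ⟨p, hp, rfl⟩
      exact ⟨p.succ, Fin.succ_lt_succ_iff.2 hp, by simp⟩

lemma stdBasis_eq (n : ℕ) (i : Fin n) : stdBasis n i = Pi.single i 1 := by
  ext m; simp [stdBasis, Pi.single_apply]

/-- Triangular form after a change of basis, and normalisation at the origin. -/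
lemma exists_tri (n : ℕ) (f : QV n ≃ QV n) (hf : permGate n f ∈ CliffordLevel n 3) :
    ∃ (L : QV n ≃ₗ[ZMod 2] QV n) (π : QV n ≃ QV n), (∀ v, π v = L (f v + f 0)) ∧
      ∀ u, ∃ A : Matrix (Fin n) (Fin n) (ZMod 2), StrictLowerTri n A ∧
        ∀ v, π (π.symm v + u) = v + A.mulVec v + π u := by
  have h2 : ∀ x : QV n, x + x = 0 := fun x => by ext i; exact CharTwo.add_self_eq_zero _
  choose t ht using exists_lin n f hf
  have hcomp : ∀ u u' v, t u (t u' v) = f (f.symm v + (u' + u)) + f (f.symm 0 + (u' + u)) := by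
    intro u u' v
    have key : ∀ v, f (f.symm v + (u' + u)) =
        t u (t u' v) + (t u (f (f.symm 0 + u')) + f (f.symm 0 + u)) := by
      intro v
      have := ht u (f (f.symm v + u'))
      rw [Equiv.symm_apply_apply, ht u' v, map_add (t u), add_assoc (f.symm v), add_assoc] at this
      exact this
    rw [key v, key 0]
    simp only [map_zero, zero_add]
    rw [add_assoc, h2, add_zero]
  have htt : ∀ u v, t u (t u v) = v := by
    intro u v
    rw [hcomp, h2]; simp
  have htc : ∀ u u' v, t u (t u' v) = t u' (t u v) := by
    intro u u' v
    rw [hcomp, hcomp, add_comm u u']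
  obtain ⟨w, hw, hflag⟩ := exists_flag (fun u => t u + LinearMap.id)
    (by intro u v; simp only [LinearMap.add_apply, LinearMap.id_apply, map_add, htt]
        rw [add_comm v, h2])
    (by intro u u' v; simp only [LinearMap.add_apply, LinearMap.id_apply, map_add]
        rw [htc u u']; abel) n (by simp)
  let b := basisOfLinearIndependentOfCardEqFinrank' w hw (by simp)
  have hb : ⇑b = w := by simp [b]
  let L : QV n ≃ₗ[ZMod 2] QV n := b.equivFun
  have hL : ∀ q, L (w q) = Pi.single q 1 := by
    intro q
    rw [← hb]
    ext i
    simp [L, Module.Basis.equivFun_apply, Finsupp.single_apply, Pi.single_apply, eq_comm]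
  let π : QV n ≃ QV n := (f.trans (Equiv.addRight (f 0))).trans L.toEquiv
  have hπ : ∀ v, π v = L (f v + f 0) := fun v => rfl
  have hπs : ∀ v, π.symm v = f.symm (L.symm v + f 0) := by
    intro v
    rw [Equiv.symm_apply_eq, hπ]
    simp [add_assoc, h2]
  refine ⟨L, π, hπ, fun u => ?_⟩
  let M : QV n →ₗ[ZMod 2] QV n :=
    L.toLinearMap ∘ₗ (t u + LinearMap.id) ∘ₗ L.symm.toLinearMap
  have hM : ∀ v, M v = L (t u (L.symm v)) + v := by
    intro v; simp [M]
  refine ⟨LinearMap.toMatrix' M, ?_, ?_⟩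
  · intro p q hpq
    rw [LinearMap.toMatrix'_apply]
    have h1 : L.symm (Pi.single q 1) = w q := by
      rw [LinearEquiv.symm_apply_eq, hL]
    have h3 := hflag u q
    have h4 : M (Pi.single q 1) = L ((t u + LinearMap.id : QV n →ₗ[ZMod 2] QV n) (w q)) := by
      rw [← h1]; rfl
    have h5 : M (fun j' => if j' = q then 1 else 0) = M (Pi.single q 1) := by
      congr 1; ext i; simp [Pi.single_apply]
    first | rw [h5, h4] | rw [h4]
    have : Submodule.span (ZMod 2) (w '' Set.Ioi q) ≤
        LinearMap.ker ((LinearMap.proj p : QV n →ₗ[ZMod 2] ZMod 2) ∘ₗ L.toLinearMap) := by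
      rw [Submodule.span_le]
      rintro _ ⟨r, hr, rfl⟩
      have : p ≠ r := ne_of_lt (lt_of_le_of_lt hpq hr)
      simp [hL, Pi.single_apply, this]
    exact this h3
  · intro v
    rw [LinearMap.toMatrix'_mulVec, hM, hπs, hπ, hπ, ht]
    have h0 := ht u (f 0)
    rw [Equiv.symm_apply_apply, zero_add] at h0
    rw [h0]
    simp only [map_add]
    have e := h2 v
    rw [show v + (L (t u (L.symm v)) + v) = (v + v) + L (t u (L.symm v)) by abel, e, zero_add]
    abel

/-- Any permutation gate `π ∈ 𝒞₃` can be reduced, by Clifford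
permutations `φ₁, φ₂`, to `τ = φ₁ π φ₂` with `τ(0)=0`, `τ(eᵢ)=eᵢ`, and each
`τ Xᵢ τ⁻¹` acting by `v ↦ v + Aᵢv + eᵢ` for strictly lower triangular `Aᵢ`. -/
theorem stmt13 (n : ℕ) (hn : 1 ≤ n) (f : QV n ≃ QV n)
    (hf : permGate n f ∈ CliffordLevel n 3) :
    ∃ φ₁ φ₂ τ : QV n ≃ QV n,
      permGate n φ₁ ∈ CliffordLevel n 2 ∧
      permGate n φ₂ ∈ CliffordLevel n 2 ∧
      τ = (φ₂.trans f).trans φ₁ ∧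
      τ 0 = 0 ∧
      (∀ i : Fin n, τ (stdBasis n i) = stdBasis n i) ∧
      (∀ i : Fin n, ∃ A : Matrix (Fin n) (Fin n) (ZMod 2), StrictLowerTri n A ∧
        ∀ v : QV n, τ (τ.symm v + stdBasis n i) = v + A.mulVec v + stdBasis n i) := by
  have h2 : ∀ x : QV n, x + x = 0 := fun x => by ext i; exact CharTwo.add_self_eq_zero _
  obtain ⟨L, π, hπ, hA⟩ := exists_tri n f hf
  have hπ0 : π 0 = 0 := by rw [hπ, h2, map_zero]
  let w : Fin n → QV n := fun i => π.symm (stdBasis n i)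
  -- triangular shape: lowest coordinate of `π` on partial sums
  have hlow : ∀ (m : Fin n) (S : Finset (Fin n)), (∀ i ∈ S, m ≤ i) →
      (∀ p < m, π (∑ i ∈ S, w i) p = 0) ∧
        π (∑ i ∈ S, w i) m = if m ∈ S then 1 else 0 := by
    intro m S
    induction S using Finset.induction_on with
    | empty => intro _; simp [hπ0]
    | insert a S ha ih =>
      intro hS
      obtain ⟨ih1, ih2⟩ := ih (fun i hi => hS i (Finset.mem_insert_of_mem hi))
      have hma : m ≤ a := hS a (Finset.mem_insert_self a S)
      obtain ⟨A, hAt, hAv⟩ := hA (w a)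
      have e := hAv (π (∑ i ∈ S, w i))
      rw [Equiv.symm_apply_apply] at e
      have hz : ∀ p ≤ m, A.mulVec (π (∑ i ∈ S, w i)) p = 0 := by
        intro p hp
        simp only [Matrix.mulVec, dotProduct]
        refine Finset.sum_eq_zero fun q _ => ?_
        rcases lt_or_ge q p with hq | hq
        · rw [ih1 q (lt_of_lt_of_le hq hp), mul_zero]
        · rw [hAt p q hq, zero_mul]
      have hwa : π (w a) = stdBasis n a := by simp [w]
      rw [Finset.sum_insert ha, add_comm, e, hwa]
      constructor
      · intro p hp
        have : p ≠ a := ne_of_lt (lt_of_lt_of_le hp hma)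
        simp [ih1 p hp, hz p hp.le, stdBasis, this]
      · by_cases hm : m = a
        · subst hm
          simp [ih2, hz m le_rfl, stdBasis, ha]
        · simp [ih2, hz m le_rfl, stdBasis, hm]
  have hli : LinearIndependent (ZMod 2) w := by
    rw [Fintype.linearIndependent_iff]
    intro g hg
    by_contra! hne
    let S : Finset (Fin n) := Finset.univ.filter (fun i => g i ≠ 0)
    have hSne : S.Nonempty := by
      obtain ⟨i, hi⟩ := hne
      exact ⟨i, by simpa [S] using hi⟩
    have h01 : ∀ x : ZMod 2, x ≠ 0 → x = 1 := by decide
    have hsum : ∑ i ∈ S, w i = 0 := by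
      rw [← hg, Finset.sum_filter]
      refine Finset.sum_congr rfl fun i _ => ?_
      by_cases hi : g i = 0
      · simp [hi]
      · simp [h01 _ hi]
    have := (hlow (S.min' hSne) S (fun i hi => S.min'_le i hi)).2
    rw [hsum, hπ0, if_pos (S.min'_mem hSne)] at this
    simp at this
  let b := basisOfLinearIndependentOfCardEqFinrank' w hli (by simp)
  have hb : ⇑b = w := by simp [b]
  let K : QV n ≃ₗ[ZMod 2] QV n := b.equivFun.symm
  have hK : ∀ i, K (stdBasis n i) = w i := by
    intro i
    rw [← hb, LinearEquiv.symm_apply_eq]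
    ext m
    simp [Module.Basis.equivFun_apply, Finsupp.single_apply, stdBasis, eq_comm]
  have hτs : ∀ i, π (K (stdBasis n i)) = stdBasis n i := by
    intro i; rw [hK]; simp [w]
  let φ₁ : QV n ≃ QV n := (Equiv.addRight (f 0)).trans L.toEquiv
  have hφ : ∀ v, φ₁ v = L (v + f 0) := fun v => rfl
  have hτ : (K.toEquiv.trans f).trans φ₁ = K.toEquiv.trans π := by
    ext1 v
    simp only [Equiv.trans_apply, hφ, hπ]
  refine ⟨φ₁, K.toEquiv, K.toEquiv.trans π, ?_, ?_, hτ.symm, ?_, ?_, ?_⟩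
  · exact clifford_of_affine n L (L (f 0)) φ₁ (fun v => by rw [hφ, map_add])
  · exact clifford_of_affine n K 0 K.toEquiv (fun v => by simp)
  · simp [hπ0]
  · exact hτs
  · intro i
    obtain ⟨A, hAt, hAv⟩ := hA (w i)
    refine ⟨A, hAt, fun v => ?_⟩
    have e := hAv v
    rw [← hK, hτs] at e
    rw [← e]
    change π (K (K.symm (π.symm v) + stdBasis n i)) = _
    rw [map_add, LinearEquiv.apply_symm_apply]
end

section
/- The smallest number of qubits n for which there exists a permutation gate in 𝒞₃ that is not semi-Clifford is n = 7; that is, for every n ≤ 6 every permutation gate in 𝒞₃ on n qubits is semi-Clifford, and for n = 7 there exists a permutation gate in 𝒞₃ that is not semi-Clifford. -/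
namespace S18

/-- The sign character of `ZMod 2`. -/
noncomputable def chi (x : ZMod 2) : ℂ := (-1) ^ x.val

theorem chi_add (x y : ZMod 2) : chi (x + y) = chi x * chi y := by
  have h : ∀ x : ZMod 2, x = 0 ∨ x = 1 := by decide
  have h2 : (1 + 1 : ZMod 2) = 0 := by decide
  rcases h x with rfl | rfl <;> rcases h y with rfl | rfl <;> simp [chi, h2, ZMod.val_one]

theorem chi_zero : chi 0 = 1 := by simp [chi]

theorem chi_inj {x y : ZMod 2} (h : chi x = chi y) : x = y := by
  have hh : ∀ x : ZMod 2, x = 0 ∨ x = 1 := by decide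
  rcases hh x with rfl | rfl <;> rcases hh y with rfl | rfl <;>
    simp [chi, ZMod.val_one] at h ⊢ <;> norm_num at h

theorem chi_mul_self (x : ZMod 2) : chi x * chi x = 1 := by
  rw [← chi_add, CharTwo.add_self_eq_zero, chi_zero]

theorem chi_star (x : ZMod 2) : star (chi x) = chi x := by
  simp [chi]

theorem chi_ne (x : ZMod 2) : chi x ≠ 0 := by simp [chi]

theorem chi_cases (x : ZMod 2) : chi x = 1 ∨ chi x = -1 := by
  fin_cases x <;> simp [chi, ZMod.val]

theorem chi_sum {ι : Type*} (s : Finset ι) (f : ι → ZMod 2) :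
    chi (∑ i ∈ s, f i) = ∏ i ∈ s, chi (f i) := by
  classical
  induction s using Finset.induction_on with
  | empty => simp [chi_zero]
  | insert a s ha ih => rw [Finset.sum_insert ha, Finset.prod_insert ha, chi_add, ih]

theorem sign_eq (n : ℕ) (z b : QV n) :
    (-1 : ℂ) ^ (∑ i, (z i).val * (b i).val) = chi (z ⬝ᵥ b) := by
  rw [dotProduct, chi_sum, ← Finset.prod_pow_eq_pow_sum]
  refine Finset.prod_congr rfl fun i _ => ?_
  generalize z i = x
  generalize b i = y
  have hh : ∀ x : ZMod 2, x = 0 ∨ x = 1 := by decide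
  rcases hh x with rfl | rfl <;> rcases hh y with rfl | rfl <;> simp [chi, ZMod.val_one]

/-- Monomial gate `|b⟩ ↦ s b |h b⟩`. -/
noncomputable def mono {n : ℕ} (h : QV n → QV n) (s : QV n → ℂ) : QMat n :=
  fun a b => if a = h b then s b else 0

theorem mono_mul {n : ℕ} (h k : QV n → QV n) (s t : QV n → ℂ) :
    mono h s * mono k t = mono (h ∘ k) (fun b => s (k b) * t b) := by
  ext a b
  simp [mono, Matrix.mul_apply]

theorem mono_star {n : ℕ} (h : QV n ≃ QV n) (s : QV n → ℂ) :
    star (mono h s) = mono h.symm (fun b => star (s (h.symm b))) := by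
  ext a b
  simp only [mono, Matrix.star_apply]
  by_cases hb : b = h a
  · subst hb; simp
  · have : a ≠ h.symm b := fun e => hb (by simp [e])
    simp [hb, this]

theorem mono_one {n : ℕ} : (mono id (fun _ => 1) : QMat n) = 1 := by
  ext a b
  simp [mono, Matrix.one_apply]

theorem mono_eq {n : ℕ} {h k : QV n → QV n} {s t : QV n → ℂ} (hs : ∀ b, s b ≠ 0)
    (e : mono h s = mono k t) : h = k ∧ s = t := by
  have key : ∀ b, h b = k b ∧ s b = t b := by
    intro b
    have := congrFun (congrFun e (h b)) b
    simp only [mono, if_true] at this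
    by_cases hk : h b = k b
    · simp [hk] at this; exact ⟨hk, this⟩
    · simp [hk] at this; exact absurd this (hs b)
  exact ⟨funext fun b => (key b).1, funext fun b => (key b).2⟩

theorem permGate_eq {n : ℕ} (f : QV n ≃ QV n) : permGate n f = mono f (fun _ => 1) := rfl

theorem XZ_eq {n : ℕ} (u z : QV n) :
    XZGate n u z = mono (fun b => b + u) (fun b => chi (z ⬝ᵥ b)) := by
  ext a b
  simp only [XZGate, mono, sign_eq]

theorem smul_mono {n : ℕ} (c : ℂ) (h : QV n → QV n) (s : QV n → ℂ) :
    c • mono h s = mono h (fun b => c * s b) := by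
  ext a b
  simp [mono]

/-- The allowed phases. -/
def Phase (c : ℂ) : Prop := c = 1 ∨ c = -1 ∨ c = Complex.I ∨ c = -Complex.I

theorem Phase.star_mul {c : ℂ} (h : Phase c) : c * star c = 1 := by
  rcases h with h | h | h | h <;> subst h <;> simp

theorem Phase.ne {c : ℂ} (h : Phase c) : c ≠ 0 := by
  rcases h with h | h | h | h <;> subst h <;> simp

theorem Phase.chi {c : ℂ} (h : Phase c) (x : ZMod 2) : Phase (c * chi x) := by
  rcases chi_cases x with e | e <;> rw [e] <;> rcases h with h | h | h | h <;> subst h <;>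
    simp [Phase]

theorem mem_pauli {n : ℕ} {P : QMat n} (h : P ∈ PauliGroup n) :
    ∃ c u z, Phase c ∧ P = mono (fun b => b + u) (fun b => c * S18.chi (z ⬝ᵥ b)) := by
  obtain ⟨c, u, z, hc, rfl⟩ := h
  exact ⟨c, u, z, hc, by rw [XZ_eq, smul_mono]⟩

/-- Additive functionals are dot products. -/
theorem exists_dot {n : ℕ} (F : QV n → ZMod 2) (hF : ∀ a b, F (a + b) = F a + F b) :
    ∃ z : QV n, ∀ b, F b = z ⬝ᵥ b := by
  let G : QV n →+ ZMod 2 := AddMonoidHom.mk' F hF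
  let L : QV n →ₗ[ZMod 2] ZMod 2 := G.toZModLinearMap 2
  refine ⟨fun i => L (Pi.single i 1), fun b => ?_⟩
  have h1 : F b = L b := rfl
  rw [h1, LinearMap.pi_apply_eq_sum_univ L b, dotProduct]
  refine Finset.sum_congr rfl fun i _ => ?_
  rw [smul_eq_mul, mul_comm]
  congr 2
  ext j
  simp [Pi.single_apply, eq_comm]

theorem pauli_of {n : ℕ} {c : ℂ} (hc : Phase c) (u : QV n) (F : QV n → ZMod 2)
    (hF : ∀ a b, F (a + b) = F a + F b + F 0) :
    mono (fun b => b + u) (fun b => c * chi (F b)) ∈ PauliGroup n := by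
  obtain ⟨z, hz⟩ := exists_dot (fun b => F b + F 0) (by
    intro a b; simp only [hF a b]
    generalize F a = x; generalize F b = y; generalize F 0 = w
    revert x y w; decide)
  refine ⟨c * chi (F 0), u, z, hc.chi _, ?_⟩
  rw [XZ_eq, smul_mono]
  congr 1
  funext b
  rw [← hz, chi_add, mul_assoc]
  congr 1
  rw [mul_comm (chi (F b)), ← mul_assoc, chi_mul_self, one_mul]

theorem mono_unitary {n : ℕ} (h : QV n ≃ QV n) (s : QV n → ℂ) (hs : ∀ b, s b * star (s b) = 1) :
    mono h s ∈ Matrix.unitaryGroup (QV n) ℂ := by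
  rw [Matrix.mem_unitaryGroup_iff, mono_star, mono_mul]
  simp only [hs]
  rw [← mono_one]
  congr 1
  funext b; simp

theorem self_add {n : ℕ} (x : QV n) : x + x = 0 := by
  funext i
  exact CharTwo.add_self_eq_zero (x i)

theorem symm_affine {n : ℕ} (h : QV n ≃ QV n) (hh : ∀ a b, h (a + b) = h a + h b + h 0)
    (a b : QV n) : h.symm (a + b) = h.symm a + h.symm b + h.symm 0 := by
  apply h.injective
  have e0 : h (h.symm 0) = 0 := by simp
  rw [hh (h.symm a + h.symm b), hh (h.symm a), e0, Equiv.apply_symm_apply,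
    Equiv.apply_symm_apply, Equiv.apply_symm_apply]
  rw [add_zero, add_assoc, self_add, add_zero]

theorem clifford_mono {n : ℕ} (h : QV n ≃ QV n) (hh : ∀ a b, h (a + b) = h a + h b + h 0)
    {c : ℂ} (hc : Phase c) (Q : QV n → ZMod 2)
    (hQ : ∀ a b u, Q (a + b + u) + Q (a + b) = Q (a + u) + Q (b + u) + Q a + Q b + Q u + Q 0) :
    mono h (fun b => c * chi (Q b)) ∈ CliffordLevel n 2 := by
  have hu : ∀ b, (c * chi (Q b)) * star (c * chi (Q b)) = 1 := by
    intro b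
    rw [star_mul', chi_star, mul_mul_mul_comm, hc.star_mul, chi_mul_self, one_mul]
  refine ⟨mono_unitary h _ hu, ?_⟩
  intro P hP
  obtain ⟨c', u, z, hc', rfl⟩ := mem_pauli hP
  rw [mono_star, mono_mul, mono_mul]
  have hk := symm_affine h hh
  have key := pauli_of hc' (h u + h 0)
    (fun b => Q (h.symm b + u) + Q (h.symm b) + z ⬝ᵥ h.symm b) (by
      intro a b
      simp only [hk a b]
      have q1 := hQ (h.symm a + h.symm b) (h.symm 0) u
      have q2 := hQ (h.symm a) (h.symm b) u
      rw [dotProduct_add, dotProduct_add]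
      linear_combination q1 + q2 + (Q u + Q 0) * CharTwo.two_eq_zero (R := ZMod 2))
  change _ ∈ PauliGroup n
  convert key using 2
  · funext b
    simp only [Function.comp]
    rw [hh, Equiv.apply_symm_apply, add_assoc]
  · funext b
    rw [star_mul', chi_star, chi_add, chi_add]
    linear_combination (c' * chi (Q (h.symm b + u)) * chi (Q (h.symm b)) * chi (z ⬝ᵥ h.symm b)) * hc.star_mul

theorem clifford_perm {n : ℕ} (h : QV n ≃ QV n) (hh : ∀ a b, h (a + b) = h a + h b + h 0) :
    permGate n h ∈ CliffordLevel n 2 := by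
  have := clifford_mono h hh (c := 1) (Or.inl rfl) (fun _ => 0) (by simp)
  simp only [chi_zero, mul_one] at this
  exact this

theorem clifford_mul {n : ℕ} {A B : QMat n} (hA : A ∈ CliffordLevel n 2)
    (hB : B ∈ CliffordLevel n 2) : A * B ∈ CliffordLevel n 2 := by
  refine ⟨mul_mem hA.1 hB.1, fun P hP => ?_⟩
  have := hA.2 _ (hB.2 P hP)
  rw [star_mul]
  simpa only [mul_assoc] using this

/-! ### The seven qubit gate -/

/-- The cubic permutation on seven bits. -/
def fwd (v : QV 7) : QV 7 :=
  ![v 0, v 1, v 2, v 3 + v 0 * v 1, v 4 + v 0 * v 2, v 5 + v 1 * v 2,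
    v 6 + v 0 * v 5 + v 1 * v 4 + v 2 * v 3 + v 0 * v 1 * v 2]

/-- Its quadratic inverse. -/
def bwd (v : QV 7) : QV 7 :=
  ![v 0, v 1, v 2, v 3 + v 0 * v 1, v 4 + v 0 * v 2, v 5 + v 1 * v 2,
    v 6 + v 0 * v 5 + v 1 * v 4 + v 2 * v 3]

/-- The permutation as an equivalence. -/
def perm7 : QV 7 ≃ QV 7 where
  toFun := fwd
  invFun := bwd
  left_inv v := by
    funext i
    fin_cases i <;> simp [fwd, bwd] <;> grind
  right_inv v := by
    funext i
    fin_cases i <;> simp [fwd, bwd] <;> grind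

theorem bwd_quad (a b u : QV 7) :
    bwd (a + b + u) + bwd (a + b) = bwd (a + u) + bwd (b + u) + bwd a + bwd b + bwd u + bwd 0 := by
  funext i
  fin_cases i <;> simp [bwd] <;> grind

theorem perm7_conj (u a b : QV 7) :
    fwd (bwd (a + b) + u) = fwd (bwd a + u) + fwd (bwd b + u) + fwd (bwd 0 + u) := by
  funext i
  fin_cases i <;> simp [fwd, bwd] <;> grind

theorem perm7_mem : permGate 7 perm7 ∈ CliffordLevel 7 3 := by
  refine ⟨mono_unitary _ _ (by simp), ?_⟩
  intro P hP
  obtain ⟨c, u, z, hc, rfl⟩ := mem_pauli hP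
  rw [permGate_eq, mono_star, mono_mul, mono_mul]
  have := clifford_mono ((perm7.symm.trans (Equiv.addRight u)).trans perm7)
    (fun a b => perm7_conj u a b) hc (fun b => z ⬝ᵥ bwd b) (by
      intro a b u
      simp only [← dotProduct_add, bwd_quad])
  convert this using 1
  congr 1
  funext b
  simp [perm7]

theorem pauli_finite (n : ℕ) : (PauliGroup n).Finite := by
  have : PauliGroup n ⊆ (fun p : ℂ × QV n × QV n => p.1 • XZGate n p.2.1 p.2.2) ''
      (({1, -1, Complex.I, -Complex.I} : Set ℂ) ×ˢ Set.univ) := by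
    rintro P ⟨c, u, z, hc, rfl⟩
    exact ⟨(c, u, z), ⟨by simpa using hc, trivial⟩, rfl⟩
  refine Set.Finite.subset ?_ this
  apply Set.Finite.image
  exact Set.Finite.prod (by simp) Set.finite_univ

theorem clifford_surj {n : ℕ} {A P : QMat n} (hA : A ∈ CliffordLevel n 2)
    (hP : P ∈ PauliGroup n) : ∃ Q ∈ PauliGroup n, A * Q = P * A := by
  have hs : star A * A = 1 := Matrix.mem_unitaryGroup_iff'.1 hA.1
  have hfin := pauli_finite n
  have hmaps : Set.MapsTo (fun Q => A * Q * star A) (PauliGroup n) (PauliGroup n) := hA.2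
  have hinj : Set.InjOn (fun Q => A * Q * star A) (PauliGroup n) := by
    intro X _ Y _ h
    have := congrArg (fun M => star A * M * A) h
    simpa [mul_assoc, hs, ← mul_assoc (star A) A] using this
  have hsurj : Set.SurjOn (fun Q => A * Q * star A) (PauliGroup n) (PauliGroup n) := by
    intro P hP
    obtain ⟨Q, hQ, e⟩ := Set.surj_on_of_inj_on_of_ncard_le (s := PauliGroup n) (t := PauliGroup n)
      (fun Q _ => A * Q * star A) (fun a ha => hmaps ha)
      (fun a b ha hb h => hinj ha hb h) le_rfl hfin P hP
    exact ⟨Q, hQ, e.symm⟩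
  obtain ⟨Q, hQ, e⟩ := hsurj hP
  refine ⟨Q, hQ, ?_⟩
  rw [← e]
  simp only [mul_assoc, hs, mul_one]

theorem perm7_not : ¬ IsSemiClifford 7 (permGate 7 perm7) := by
  rintro ⟨φ₁, d, φ₂, h1, h2, hd, hU⟩
  have hs1 : star φ₁ * φ₁ = 1 := Matrix.mem_unitaryGroup_iff'.1 h1.1
  have hZ : ∀ z : QV 7, ∃ Q ∈ PauliGroup 7, ∃ P ∈ PauliGroup 7,
      φ₂ * Q = XZGate 7 0 z * φ₂ ∧ permGate 7 perm7 * Q = P * permGate 7 perm7 := by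
    intro z
    have hz : XZGate 7 0 z ∈ PauliGroup 7 := ⟨1, 0, z, Or.inl rfl, by simp⟩
    obtain ⟨Q, hQ, e⟩ := clifford_surj h2 hz
    refine ⟨Q, hQ, _, h1.2 _ hz, e, ?_⟩
    have hcomm : d * XZGate 7 0 z = XZGate 7 0 z * d := by
      have hD : d = Matrix.diagonal (fun a => d a a) := by
        ext a b
        by_cases hab : a = b
        · subst hab; simp
        · simp [hab, hd a b hab]
      have hX : XZGate 7 0 z = Matrix.diagonal (fun b => chi (z ⬝ᵥ b)) := by
        ext a b
        by_cases hab : a = b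
        · subst hab; simp [XZ_eq, mono]
        · simp [XZ_eq, mono, hab]
      rw [hX, hD, Matrix.diagonal_mul_diagonal, Matrix.diagonal_mul_diagonal]
      congr 1; funext b; exact mul_comm _ _
    rw [hU, mul_assoc, e]
    calc φ₁ * d * (XZGate 7 0 z * φ₂) = φ₁ * (d * XZGate 7 0 z) * φ₂ := by simp only [mul_assoc]
      _ = φ₁ * XZGate 7 0 z * 1 * d * φ₂ := by rw [hcomm]; simp only [mul_assoc, one_mul]
      _ = _ := by rw [← hs1]; simp only [mul_assoc]
  have hdata : ∀ z : QV 7, ∃ (c : ℂ) (u w : QV 7), Phase c ∧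
      φ₂ * (mono (fun b => b + u) (fun b => c * chi (w ⬝ᵥ b))) = XZGate 7 0 z * φ₂ ∧
      (∀ i : Fin 7, i ≠ 6 → u i = 0) ∧ (w 3 = 0 ∧ w 4 = 0 ∧ w 5 = 0 ∧ w 6 = 0) := by
    intro z
    obtain ⟨Q, hQ, P, hP, e1, e2⟩ := hZ z
    obtain ⟨c, u, w, hc, rfl⟩ := mem_pauli hQ
    obtain ⟨c', u', w', hc', rfl⟩ := mem_pauli hP
    refine ⟨c, u, w, hc, e1, ?_⟩
    rw [permGate_eq, mono_mul, mono_mul] at e2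
    obtain ⟨ha, hb⟩ := mono_eq (fun b => by simpa using ⟨hc.ne, chi_ne _⟩) e2
    have hf : ∀ b, fwd (b + u) = fwd b + u' := fun b => congrFun ha b
    have hb' : ∀ b, c * chi (w ⬝ᵥ b) = c' * chi (w' ⬝ᵥ fwd b) := by
      intro b
      have := congrFun hb b
      simp only [one_mul, mul_one] at this
      exact this
    have f0 : fwd 0 = 0 := by decide
    have hcc : c = c' := by
      have := hb' 0
      simpa [f0, chi_zero] using this
    have hw : ∀ b, w ⬝ᵥ b = w' ⬝ᵥ fwd b := by
      intro b
      have := hb' b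
      rw [hcc] at this
      exact chi_inj (mul_left_cancel₀ hc'.ne this)
    constructor
    · have k0 := hf 0
      have k1 := hf ![1,0,0,0,0,0,0]
      have k2 := hf ![0,1,0,0,0,0,0]
      have k3 := hf ![0,0,1,0,0,0,0]
      have a03 := congrFun k0 3
      have a04 := congrFun k0 4
      have a05 := congrFun k0 5
      have a06 := congrFun k0 6
      have a13 := congrFun k1 3
      have a14 := congrFun k1 4
      have a15 := congrFun k1 5
      have a16 := congrFun k1 6
      have a23 := congrFun k2 3
      have a24 := congrFun k2 4
      have a25 := congrFun k2 5
      have a26 := congrFun k2 6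
      have a33 := congrFun k3 3
      have a34 := congrFun k3 4
      have a35 := congrFun k3 5
      have a36 := congrFun k3 6
      simp [fwd] at a03 a04 a05 a06 a13 a14 a15 a16 a23 a24 a25 a26 a33 a34 a35 a36
      have u0 : u 0 = 0 := by grind
      have u1 : u 1 = 0 := by grind
      have u2 : u 2 = 0 := by grind
      have u5 : u 5 = 0 := by grind
      have u4 : u 4 = 0 := by grind
      have u3 : u 3 = 0 := by grind
      intro i hi
      fin_cases i <;> first | assumption | exact absurd rfl hi
    · have k0 := hw ![1,0,0,0,0,0,0]
      have k1 := hw ![0,1,0,0,0,0,0]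
      have k2 := hw ![0,0,1,0,0,0,0]
      have k3 := hw ![0,0,0,1,0,0,0]
      have k4 := hw ![0,0,0,0,1,0,0]
      have k5 := hw ![0,0,0,0,0,1,0]
      have k6 := hw ![0,0,0,0,0,0,1]
      have k01 := hw ![1,1,0,0,0,0,0]
      have k02 := hw ![1,0,1,0,0,0,0]
      have k12 := hw ![0,1,1,0,0,0,0]
      have k05 := hw ![1,0,0,0,0,1,0]
      simp [fwd, dotProduct, Fin.sum_univ_succ] at k0 k1 k2 k3 k4 k5 k6 k01 k02 k12 k05
      refine ⟨?_, ?_, ?_, ?_⟩ <;> grind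
  choose c u w hc he hu hw using hdata
  have hinj : Function.Injective (fun z => (u z 6, w z 0, w z 1, w z 2)) := by
    intro z z' h
    simp only [Prod.mk.injEq] at h
    obtain ⟨h6, h0, h1', h2'⟩ := h
    have eu : u z = u z' := by
      funext i
      by_cases hi : i = 6
      · rw [hi, h6]
      · rw [hu z i hi, hu z' i hi]
    have ew : w z = w z' := by
      obtain ⟨a3, a4, a5, a6⟩ := hw z
      obtain ⟨b3, b4, b5, b6⟩ := hw z'
      funext i
      fin_cases i
      · exact h0
      · exact h1'
      · exact h2'
      · exact a3.trans b3.symm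
      · exact a4.trans b4.symm
      · exact a5.trans b5.symm
      · exact a6.trans b6.symm
    have hs2 : φ₂ * star φ₂ = 1 := Matrix.mem_unitaryGroup_iff.1 h2.1
    have e1 := he z
    have e2 := he z'
    rw [← smul_mono, Matrix.mul_smul] at e1 e2
    rw [← eu, ← ew] at e2
    have e3 : c z' • (XZGate 7 0 z * φ₂) = c z • (XZGate 7 0 z' * φ₂) := by
      rw [← e1, ← e2, smul_comm]
    have e4 : c z' • XZGate 7 0 z = c z • XZGate 7 0 z' := by
      have := congrArg (fun M => M * star φ₂) e3
      simpa [Matrix.smul_mul, mul_assoc, hs2] using this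
    rw [XZ_eq, XZ_eq, smul_mono, smul_mono] at e4
    have e5 := (mono_eq (fun b => mul_ne_zero (hc z').ne (chi_ne _)) e4).2
    have e6 : c z' = c z := by simpa [chi_zero] using congrFun e5 0
    rw [e6] at e5
    funext i
    have := congrFun e5 (Pi.single i 1)
    have := chi_inj (mul_left_cancel₀ (hc z).ne this)
    simpa using this
  have := Fintype.card_le_of_injective _ hinj
  simp [ZMod.card] at this

/-! ### At most six qubits -/

/-- Extract the affine condition. -/
theorem conj_affine {n : ℕ} (f : QV n ≃ QV n) (hf : permGate n f ∈ CliffordLevel n 3)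
    (u w : QV n) : ∃ w' : QV n, ∀ v, f (f.symm (v + w) + u) = f (f.symm v + u) + w' := by
  have hX : ∀ u : QV n, mono (fun b => b + u) (fun _ => 1) ∈ PauliGroup n := fun u =>
    ⟨1, u, 0, Or.inl rfl, by simp [XZ_eq, chi_zero]⟩
  have h1 := hf.2 _ (hX u)
  let p : QV n ≃ QV n := (f.symm.trans (Equiv.addRight u)).trans f
  have e1 : permGate n f * mono (fun b => b + u) (fun _ => 1) * star (permGate n f)
      = mono p (fun _ => 1) := by
    rw [permGate_eq, mono_star, mono_mul, mono_mul]
    simp only [mul_one, star_one]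
    rfl
  rw [e1] at h1
  have h2 := h1.2 _ (hX w)
  rw [mono_star, mono_mul, mono_mul] at h2
  obtain ⟨c, w', z, hc, e⟩ := mem_pauli h2
  have h3 := (mono_eq (by simp) e).1
  refine ⟨w', fun v => ?_⟩
  have := congrFun h3 (p v)
  simp only [Function.comp, Equiv.symm_apply_apply] at this
  exact this

/-- The abstract structure: a nilpotent algebra with `x² = 0`. -/
theorem exists_mul {n : ℕ} (f : QV n ≃ QV n) (hf : permGate n f ∈ CliffordLevel n 3) :
    ∃ m : QV n → QV n → QV n,
      (∀ x y z, m x (y + z) = m x y + m x z) ∧ (∀ x y, m x y = m y x) ∧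
      (∀ x y z, m (m x y) z = m x (m y z)) ∧ (∀ x, m x x = 0) ∧
      (∀ u v, f (u + v) + f 0 = (f u + f 0) + (f v + f 0) + m (f u + f 0) (f v + f 0)) := by
  have cc : ∀ x y : QV n, x + y + y = x := fun x y => by rw [add_assoc, self_add, add_zero]
  -- the group law
  let g : QV n → QV n := fun x => f.symm (x + f 0)
  let F : QV n → QV n := fun x => f x + f 0
  have gF : ∀ x, g (F x) = x := fun x => by simp [g, F, cc]
  have Fg : ∀ x, F (g x) = x := fun x => by simp [g, F, cc]
  have F0 : F 0 = 0 := self_add _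
  let o : QV n → QV n → QV n := fun x y => F (g x + g y)
  have g0 : g 0 = 0 := by simpa only [F0] using gF 0
  have o_aff : ∀ x y z, o x (y + z) = o x y + o x z + x := by
    intro x y z
    obtain ⟨w', hw⟩ := conj_affine f hf (g x) z
    have k1 := hw (y + f 0)
    have k2 := hw (f 0)
    have k3 : o x 0 = x := by simp only [o, g0, add_zero, Fg]
    have r1 : o x (y + z) = o x y + w' := by
      have : y + z + f 0 = y + f 0 + z := by abel
      simp only [o, F, g]
      rw [this, add_comm (f.symm (x + f 0)), add_comm (f.symm (x + f 0))]
      rw [show f (f.symm (y + f 0 + z) + f.symm (x + f 0)) = _ from k1]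
      simp only [g]
      abel
    have r2 : o x z = x + w' := by
      have e1 : o x z = f (f.symm (f 0 + z) + g x) + f 0 := by
        simp only [o, F, g, add_comm]
      have e2 : o x 0 = f (f.symm (f 0) + g x) + f 0 := by
        simp only [o, F, g0, Equiv.symm_apply_apply, add_comm]
      rw [e1, k2]
      rw [k3] at e2
      rw [add_right_comm, ← e2]
    rw [r1, r2, add_comm x w', ← add_assoc, cc]
  have o_comm : ∀ x y, o x y = o y x := fun x y => by simp only [o, add_comm]
  have o_self : ∀ x, o x x = 0 := fun x => by simp only [o, self_add, F0]
  have o_assoc : ∀ x y z, o (o x y) z = o x (o y z) := fun x y z => by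
    simp only [o, gF, add_assoc]
  have oF : ∀ u v, o (F u) (F v) = F (u + v) := fun u v => by simp only [o, gF]
  clear_value o
  let m : QV n → QV n → QV n := fun x y => o x y + x + y
  have om : ∀ x y, o x y = x + y + m x y := by
    intro x y
    have : x + y + m x y = o x y + (x + x) + (y + y) := by simp only [m]; abel
    rw [this, self_add, self_add, add_zero, add_zero]
  have m_add : ∀ x y z, m x (y + z) = m x y + m x z := by
    intro x y z
    simp only [m, o_aff]
    abel
  have m_comm : ∀ x y, m x y = m y x := by
    intro x y
    simp only [m, o_comm x y]; abel
  have m_self : ∀ x, m x x = 0 := by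
    intro x
    simp only [m, o_self, zero_add, self_add]
  have m_add' : ∀ x y z, m (x + y) z = m x z + m y z := by
    intro x y z
    rw [m_comm, m_add, m_comm z, m_comm z]
  refine ⟨m, m_add, m_comm, ?_, m_self, ?_⟩
  · intro x y z
    have := o_assoc x y z
    rw [om, om x y, om x, om y z] at this
    rw [m_add', m_add', m_add, m_add] at this
    have h2 : (x + y + z + m x y + m x z + m y z) + m (m x y) z
        = (x + y + z + m x y + m x z + m y z) + m x (m y z) := by
      calc _ = x + y + m x y + z + (m x z + m y z + m (m x y) z) := by abel
        _ = _ := by rw [this]; abel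
    exact add_left_cancel h2
  · intro u v
    have := om (F u) (F v)
    rw [oF] at this
    exact this

theorem mul_zero3 {n : ℕ} (hn : n ≤ 6) (m : QV n → QV n → QV n)
    (h_add : ∀ x y z, m x (y + z) = m x y + m x z) (h_comm : ∀ x y, m x y = m y x)
    (h_assoc : ∀ x y z, m (m x y) z = m x (m y z)) (h_self : ∀ x, m x x = 0)
    (x y z : QV n) : m x (m y z) = 0 := by
  by_contra hne
  have h_zero : ∀ p, m p 0 = 0 := by
    intro p
    have := h_add p 0 0
    rw [add_zero] at this
    simpa using this
  have h_smul : ∀ (c : ZMod 2) p q, m p (c • q) = c • m p q := by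
    intro c p q
    have : ∀ x : ZMod 2, x = 0 ∨ x = 1 := by decide
    rcases this c with rfl | rfl <;> simp [h_zero]
  have h_sq : ∀ p q, m p (m p q) = 0 := by
    intro p q
    rw [← h_assoc, h_self, h_comm, h_zero]
  have h_sq' : ∀ p q, m p (m q p) = 0 := by
    intro p q
    rw [h_comm q p, h_sq]
  have h_left : ∀ p q r, m p (m q r) = m q (m p r) := by
    intro p q r
    rw [← h_assoc, h_comm p q, h_assoc]
  have hli : LinearIndependent (ZMod 2)
      ![x, y, z, m x y, m x z, m y z, m x (m y z)] := by
    rw [Fintype.linearIndependent_iff]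
    intro a ha
    simp only [Fin.sum_univ_succ, Fin.sum_univ_zero] at ha
    simp at ha
    have yx : m y x = m x y := h_comm _ _
    have zx : m z x = m x z := h_comm _ _
    have zy : m z y = m y z := h_comm _ _
    have yxz : m y (m x z) = m x (m y z) := h_left _ _ _
    have zxy : m z (m x y) = m x (m y z) := by rw [h_left, zy]
    have yt : m y (m x (m y z)) = 0 := by rw [h_left, h_sq, h_zero]
    have zt : m z (m x (m y z)) = 0 := by rw [h_left, h_sq', h_zero]
    have ex := congrArg (m x) ha
    have ey := congrArg (m y) ha
    have ez := congrArg (m z) ha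
    simp only [h_add, h_smul, h_self, h_sq, h_sq', yx, zx, zy, yxz, zxy, yt, zt, h_zero, smul_zero,
      add_zero, zero_add] at ex ey ez
    have exy := congrArg (m y) ex
    have exz := congrArg (m z) ex
    have eyz := congrArg (m z) ey
    simp only [h_add, h_smul, h_self, h_sq, h_sq', yx, zx, zy, yxz, zxy, yt, zt, h_zero, smul_zero,
      add_zero, zero_add] at exy exz eyz
    have a2 : a 2 = 0 := (smul_eq_zero.1 exy).resolve_right hne
    have a1 : a 1 = 0 := (smul_eq_zero.1 exz).resolve_right hne
    have a0 : a 0 = 0 := (smul_eq_zero.1 eyz).resolve_right hne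
    simp [a0, a1, a2, hne] at ex ey ez ha
    simp [ex, ey, ez, hne] at ha
    intro i
    fin_cases i
    · exact a0
    · exact a1
    · exact a2
    · exact ez
    · exact ey
    · exact ex
    · exact ha
  have := hli.fintype_card_le_finrank
  simp at this
  omega

theorem adapted_basis {n : ℕ} (W : Submodule (ZMod 2) (QV n)) :
    ∃ (b : Module.Basis (Fin n) (ZMod 2) (QV n)) (I : Fin n → Prop),
      ∀ w, w ∈ W ↔ ∀ i, ¬ I i → b.repr w i = 0 := by
  obtain ⟨V, hV⟩ := Submodule.exists_isCompl W
  let bV := Module.finBasis (ZMod 2) V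
  let bW := Module.finBasis (ZMod 2) W
  let b0 := (bV.prod bW).map (Submodule.prodEquivOfIsCompl V W hV.symm)
  have hcard := Module.finrank_eq_card_basis b0
  rw [Module.finrank_fin_fun] at hcard
  let e := (Fintype.equivFinOfCardEq hcard.symm)
  refine ⟨b0.reindex e, fun i => (e.symm i).isRight = true, fun w => ?_⟩
  rw [← Submodule.prodEquivOfIsCompl_symm_apply_fst_eq_zero V W hV.symm]
  constructor
  · intro h i hi
    rw [Module.Basis.repr_reindex_apply]
    cases hj : e.symm i with
    | inl j =>
      rw [Module.Basis.map_repr, LinearEquiv.trans_apply, Module.Basis.prod_repr_inl, h]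
      simp
    | inr j => simp [hj] at hi
  · intro h
    apply bV.repr.injective
    ext j
    have := h (e (Sum.inl j)) (by simp)
    rw [Module.Basis.repr_reindex_apply] at this
    simpa [b0] using this

/-- The class-two structure: `f` is, up to affine maps, a shear. -/
theorem exists_shear {n : ℕ} (hn : n ≤ 6) (f : QV n ≃ QV n)
    (hf : permGate n f ∈ CliffordLevel n 3) :
    ∃ (α s β : QV n ≃ QV n) (I : Fin n → Prop) (q : QV n → QV n),
      (∀ a b, α (a + b) = α a + α b + α 0) ∧ (∀ a b, β (a + b) = β a + β b + β 0) ∧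
      (∀ v, f v = α (s (β v))) ∧ (∀ c, s c = c + q c) ∧ (∀ c i, ¬ I i → q c i = 0) ∧
      (∀ c c', (∀ i, ¬ I i → c i = c' i) → q c = q c') := by
  obtain ⟨m, m_add, m_comm, m_assoc, m_self, hm⟩ := exists_mul f hf
  have m3 := mul_zero3 hn m m_add m_comm m_assoc m_self
  have m_zero : ∀ p, m p 0 = 0 := by
    intro p
    have := m_add p 0 0
    rw [add_zero] at this
    simpa using this
  have cc : ∀ x y : QV n, x + y + y = x := fun x y => by rw [add_assoc, self_add, add_zero]
  let F : QV n ≃ QV n := f.trans (Equiv.addRight (f 0))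
  have hF : ∀ u v, F (u + v) = F u + F v + m (F u) (F v) := hm
  have hFf : ∀ v, f v = F v + f 0 := fun v => (cc _ _).symm
  clear_value F
  let G := F.symm
  have FG : ∀ x, F (G x) = x := fun x => F.apply_symm_apply x
  have F0 : F 0 = 0 := by
    have := hF 0 0
    rw [self_add (F 0), m_self, add_zero] at this
    exact this
  have G0 : G 0 = 0 := by
    apply F.injective; rw [FG, F0]
  have hG : ∀ x y, G (x + y) = G x + G y + G (m x y) := by
    intro x y
    apply F.injective
    rw [hF, hF, FG, FG, FG, FG, m_comm _ (m x y), m_add, m_add, m_comm (m x y) x,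
      m_comm (m x y) y, m_comm (m x y) (m x y), m3 x, m3 y, m3 (m x y), add_zero, add_zero,
      add_zero, cc]
  let W : Submodule (ZMod 2) (QV n) := AddSubgroup.toZModSubmodule 2
    { carrier := {w | ∀ x, m x w = 0}
      add_mem' := fun {a b} ha hb x => by rw [m_add, ha, hb, add_zero]
      zero_mem' := fun x => m_zero x
      neg_mem' := fun {a} ha x => by
        have : -a = a := by rw [neg_eq_iff_add_eq_zero, self_add]
        rw [this]; exact ha x }
  have hW : ∀ w, w ∈ W ↔ ∀ x, m x w = 0 := fun w => Iff.rfl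
  clear_value W
  obtain ⟨b, I, hI⟩ := adapted_basis W
  have hGW : ∀ x w, w ∈ W → G (x + w) = G x + G w := by
    intro x w hw
    rw [hG, (hW w).1 hw x, G0, add_zero]
  have hmW : ∀ x y, m x y ∈ W := fun x y => (hW _).2 fun z => m3 z x y
  let B : QV n ≃ₗ[ZMod 2] QV n := b.equivFun.symm
  have hBW : ∀ c, B c ∈ W ↔ ∀ i, ¬ I i → c i = 0 := by
    intro c
    rw [hI]
    have : ∀ i, b.repr (B c) i = c i := fun i => by
      change b.equivFun (b.equivFun.symm c) i = c i
      rw [LinearEquiv.apply_symm_apply]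
    simp only [this]
  have hBsum : ∀ c, B c = ∑ i, c i • b i := fun c => b.equivFun_symm_apply c
  clear_value B
  let k : QV n →ₗ[ZMod 2] QV n := Fintype.linearCombination (ZMod 2) (fun i => G (b i))
  have hk : ∀ c, k c = ∑ i, c i • G (b i) := fun c => Fintype.linearCombination_apply _ _ _
  clear_value k
  have hGs : ∀ (c : ZMod 2) x, G (c • x) = c • G x := by
    intro c p
    have : ∀ x : ZMod 2, x = 0 ∨ x = 1 := by decide
    rcases this c with rfl | rfl <;> simp [G0]
  -- on `W`, `G ∘ B = k`
  have hkW : ∀ c, (∀ i, ¬ I i → c i = 0) → G (B c) = k c := by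
    intro c hc
    rw [hBsum, hk]
    have : ∀ s : Finset (Fin n), G (∑ i ∈ s, c i • b i) = ∑ i ∈ s, c i • G (b i) := by
      intro s
      induction s using Finset.induction_on with
      | empty => simp [G0]
      | insert j s hj ih =>
        rw [Finset.sum_insert hj, Finset.sum_insert hj, add_comm, hGW, ih, hGs, add_comm]
        by_cases hij : I j
        · apply W.smul_mem
          rw [hI]
          intro i hi
          rw [b.repr_self, Finsupp.single_apply, if_neg]
          rintro rfl; exact hi hij
        · rw [hc j hij, zero_smul]; exact W.zero_mem
    exact this _
  have hdiff : ∀ c, ∃ w ∈ W, G (B c) = k c + G w := by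
    intro c
    rw [hBsum, hk]
    have : ∀ s : Finset (Fin n), ∃ w ∈ W,
        G (∑ i ∈ s, c i • b i) = ∑ i ∈ s, c i • G (b i) + G w := by
      intro s
      induction s using Finset.induction_on with
      | empty => exact ⟨0, W.zero_mem, by simp [G0]⟩
      | insert j s hj ih =>
        obtain ⟨w, hw, e⟩ := ih
        refine ⟨w + m (c j • b j) (∑ i ∈ s, c i • b i), W.add_mem hw (hmW _ _), ?_⟩
        rw [Finset.sum_insert hj, Finset.sum_insert hj, hG, e, hGs, hGW _ _ (hmW _ _)]
        abel
    exact this _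
  have hkinj : Function.Injective k := by
    rw [← LinearMap.ker_eq_bot, LinearMap.ker_eq_bot']
    intro c hc
    obtain ⟨w, hw, e⟩ := hdiff c
    rw [hc, zero_add] at e
    have hBc : B c = w := G.injective e
    have h1 := hkW c ((hBW c).1 (hBc ▸ hw))
    rw [hc, ← G0] at h1
    have := G.injective h1
    simpa using this
  let K : QV n ≃ₗ[ZMod 2] QV n := LinearEquiv.ofInjectiveEndo k hkinj
  have hK : ∀ c, K c = k c := fun c => rfl
  clear_value K
  let q : QV n → QV n := fun c => K.symm (G (B c)) + c
  have hq : ∀ c, G (B c) = K (c + q c) := by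
    intro c
    have : c + q c = K.symm (G (B c)) := by
      simp only [q]; rw [add_comm, cc]
    rw [this, LinearEquiv.apply_symm_apply]
  have hq1 : ∀ c i, ¬ I i → q c i = 0 := by
    intro c
    obtain ⟨w, hw, e⟩ := hdiff c
    obtain ⟨c', rfl⟩ := B.surjective w
    rw [hkW c' ((hBW c').1 hw), ← hK, ← hK, ← map_add, hq] at e
    have := add_left_cancel (K.injective e)
    rw [this]
    exact (hBW c').1 hw
  have hq2 : ∀ c c', (∀ i, ¬ I i → c i = c' i) → q c = q c' := by
    intro c c' h
    have hd : ∀ i, ¬ I i → (c + c') i = 0 := by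
      intro i hi
      rw [Pi.add_apply, h i hi, CharTwo.add_self_eq_zero]
    have e1 : c' = c + (c + c') := by rw [← add_assoc, self_add, zero_add]
    have e2 : G (B c') = G (B c) + K (c + c') := by
      rw [hK, ← hkW _ hd, ← hGW _ _ ((hBW _).2 hd), ← map_add, ← e1]
    rw [hq, hq, ← map_add] at e2
    have e3 := K.injective e2
    have e4 : c + q c + (c + c') = c' + q c + (c + c) := by abel
    rw [e4, self_add, add_zero] at e3
    exact (add_left_cancel e3).symm
  clear_value q
  have hqq : ∀ c, q (c + q c) = q c := fun c => hq2 _ _ fun i hi => by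
    rw [Pi.add_apply, hq1 c i hi, add_zero]
  have hinv : Function.Involutive (fun c => c + q c) := by
    intro c
    simp only [hqq, cc]
  refine ⟨B.toEquiv.trans (Equiv.addRight (f 0)), hinv.toPerm, K.symm.toEquiv, I, q, ?_, ?_, ?_,
    fun c => rfl, hq1, hq2⟩
  · intro a b
    simp only [Equiv.trans_apply, LinearEquiv.coe_toEquiv, Equiv.coe_addRight, map_add, map_zero,
      zero_add]
    have : B a + f 0 + (B b + f 0) + f 0 = B a + B b + f 0 + f 0 + f 0 := by abel
    rw [this, cc]
  · intro a b
    simp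
  · intro v
    change f v = B ((fun c => c + q c) (K.symm v)) + f 0
    rw [hFf]
    congr 1
    apply G.injective
    rw [hq]
    have e := hinv (K.symm v)
    simp only at e ⊢
    rw [e]
    simp [G]

/-! ### Partial Hadamard gates -/

open Classical in
/-- One-qubit factor of a partial Hadamard. -/
noncomputable def hfac (p : Prop) (a b : ZMod 2) : ℂ :=
  if p then chi (a * b) * ((Real.sqrt 2 : ℝ) : ℂ)⁻¹ else if a = b then 1 else 0

/-- Partial Hadamard on the qubits in `I`. -/
noncomputable def had {n : ℕ} (I : Fin n → Prop) : QMat n :=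
  fun a b => ∏ i, hfac (I i) (a i) (b i)

theorem sqrt_two_inv : ((Real.sqrt 2 : ℝ) : ℂ)⁻¹ * ((Real.sqrt 2 : ℝ) : ℂ)⁻¹ = 1 / 2 := by
  rw [← mul_inv, ← Complex.ofReal_mul, Real.mul_self_sqrt (by norm_num)]
  norm_num

theorem chi_one : chi 1 = -1 := by simp [chi, ZMod.val_one]

theorem z2 (x : ZMod 2) : x = 0 ∨ x = 1 := by revert x; decide

theorem hfac_sum (p : Prop) (a c t : ZMod 2) (ht : ¬ p → t = 0) :
    ∑ β : ZMod 2, hfac p a β * chi (β * t) * hfac p β c = if a = c + t then 1 else 0 := by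
  have hs : ∀ g : ZMod 2 → ℂ, ∑ β, g β = g 0 + g 1 := fun g => Fin.sum_univ_two g
  have h2 : (1 + 1 : ZMod 2) = 0 := by decide
  have h := sqrt_two_inv
  rw [hs]
  by_cases hp : p
  · simp only [hfac, hp, if_true]
    rcases z2 a with rfl | rfl <;> rcases z2 c with rfl | rfl <;> rcases z2 t with rfl | rfl <;>
      simp [chi_zero, chi_one, h2] <;> linear_combination 2 * h
  · rw [ht hp]
    simp only [hfac, hp, if_false]
    rcases z2 a with rfl | rfl <;> rcases z2 c with rfl | rfl <;> simp [chi_zero]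

theorem hfac_symm (p : Prop) (a b : ZMod 2) : hfac p a b = hfac p b a := by
  simp only [hfac, mul_comm, eq_comm]

theorem hfac_star (p : Prop) (a b : ZMod 2) : star (hfac p a b) = hfac p a b := by
  unfold hfac
  split_ifs
  · rw [star_mul', chi_star, star_inv₀]
    simp
  · simp
  · simp

theorem had_star {n : ℕ} (I : Fin n → Prop) : star (had I) = had I := by
  ext a b
  simp only [Matrix.star_apply, had]
  rw [star_prod]
  refine Finset.prod_congr rfl fun i _ => ?_
  rw [hfac_star, hfac_symm]

theorem had_shear {n : ℕ} (I : Fin n → Prop) (q : QV n → QV n)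
    (h1 : ∀ c i, ¬ I i → q c i = 0)
    (h2 : ∀ c c', (∀ i, ¬ I i → c i = c' i) → q c = q c') :
    had I * Matrix.diagonal (fun b => chi (b ⬝ᵥ q b)) * had I
      = mono (fun c => c + q c) (fun _ => 1) := by
  ext a c
  rw [Matrix.mul_apply]
  simp only [Matrix.mul_diagonal]
  have step : ∀ b, had I a b * chi (b ⬝ᵥ q b) * had I b c =
      ∏ i, (hfac (I i) (a i) (b i) * chi (b i * q a i) * hfac (I i) (b i) (c i)) := by
    intro b
    rw [Finset.prod_mul_distrib, Finset.prod_mul_distrib, ← chi_sum]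
    by_cases hab : ∀ i, ¬ I i → a i = b i
    · rw [h2 a b hab]; rfl
    · push Not at hab
      obtain ⟨i, hi, hne⟩ := hab
      have : had I a b = 0 := Finset.prod_eq_zero (Finset.mem_univ i) (by simp [hfac, hi, hne])
      have h' : ∏ i, hfac (I i) (a i) (b i) = 0 := this
      rw [this, h']
      simp
  rw [Finset.sum_congr rfl fun b _ => step b]
  have hps := Finset.prod_univ_sum (fun _ : Fin n => (Finset.univ : Finset (ZMod 2)))
    (fun i β => hfac (I i) (a i) β * chi (β * q a i) * hfac (I i) β (c i))
  rw [Fintype.piFinset_univ] at hps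
  rw [← hps]
  simp only [hfac_sum _ _ _ _ (h1 a _), mono]
  by_cases hac : a = c + q c
  · rw [if_pos hac]
    have : q a = q c := h2 _ _ fun i hi => by rw [hac, Pi.add_apply, h1 c i hi, add_zero]
    apply Finset.prod_eq_one
    intro i _
    rw [if_pos]
    rw [this]
    exact congrFun hac i
  · rw [if_neg hac]
    have : ∃ i, a i ≠ c i + q a i := by
      by_contra hcon
      push Not at hcon
      have e : q a = q c := h2 _ _ fun i hi => by rw [hcon i, h1 a i hi, add_zero]
      apply hac
      funext i
      rw [hcon i, e]; rfl
    obtain ⟨i, hi⟩ := this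
    exact Finset.prod_eq_zero (Finset.mem_univ i) (if_neg hi)

theorem had_mul_self {n : ℕ} (I : Fin n → Prop) : had I * had I = 1 := by
  have := had_shear I (fun _ => 0) (by simp) (by simp)
  simp only [dotProduct_zero, chi_zero, Matrix.diagonal_one, mul_one, add_zero] at this
  rw [this, ← mono_one]
  rfl

open Classical in
theorem hfac_conj (p : Prop) (a b u z : ZMod 2) :
    hfac p a (b + u) * chi (z * b) =
      (if p then chi (u * z) else 1) *
        (chi ((if p then u else z) * (a + (if p then z else u))) *
          hfac p (a + (if p then z else u)) b) := by
  have h2 : (1 + 1 : ZMod 2) = 0 := by decide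
  by_cases hp : p
  · simp only [hfac, hp, if_true]
    rcases z2 a with rfl | rfl <;> rcases z2 b with rfl | rfl <;> rcases z2 u with rfl | rfl <;>
      rcases z2 z with rfl | rfl <;> simp [chi_zero, chi_one, h2]
  · simp only [hfac, hp, if_false]
    rcases z2 a with rfl | rfl <;> rcases z2 b with rfl | rfl <;> rcases z2 u with rfl | rfl <;>
      rcases z2 z with rfl | rfl <;> simp [chi_zero, chi_one, h2]

theorem had_clifford {n : ℕ} (I : Fin n → Prop) : had I ∈ CliffordLevel n 2 := by
  classical
  refine ⟨?_, ?_⟩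
  · rw [Matrix.mem_unitaryGroup_iff, had_star, had_mul_self]
  intro P hP
  obtain ⟨c, u, z, hc, rfl⟩ := mem_pauli hP
  rw [had_star]
  let u' : QV n := fun i => if I i then z i else u i
  let z' : QV n := fun i => if I i then u i else z i
  let ε : ZMod 2 := ∑ i, if I i then u i * z i else 0
  have key : had I * mono (fun b => b + u) (fun b => c * chi (z ⬝ᵥ b)) =
      mono (fun b => b + u') (fun b => (c * chi ε) * chi (z' ⬝ᵥ b)) * had I := by
    ext a b
    rw [Matrix.mul_apply, Matrix.mul_apply]
    have hl : ∀ x, had I a x * mono (fun b => b + u) (fun b => c * chi (z ⬝ᵥ b)) x b =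
        if x = b + u then had I a (b + u) * (c * chi (z ⬝ᵥ b)) else 0 := by
      intro x
      simp only [mono]
      split_ifs with h
      · rw [h]
      · simp
    have hr : ∀ x, mono (fun b => b + u') (fun b => (c * chi ε) * chi (z' ⬝ᵥ b)) a x * had I x b =
        if x = a + u' then (c * chi ε) * chi (z' ⬝ᵥ (a + u')) * had I (a + u') b else 0 := by
      intro x
      simp only [mono]
      by_cases h : x = a + u'
      · rw [if_pos h, if_pos, h]
        rw [h, add_assoc, self_add, add_zero]
      · rw [if_neg h, if_neg, zero_mul]
        rintro rfl
        apply h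
        rw [add_assoc, self_add, add_zero]
    simp only [hl, hr, Finset.sum_ite_eq', Finset.mem_univ, if_true]
    have e := Finset.prod_congr (rfl : (Finset.univ : Finset (Fin n)) = _)
      (fun i _ => hfac_conj (I i) (a i) (b i) (u i) (z i))
    rw [Finset.prod_mul_distrib, Finset.prod_mul_distrib, Finset.prod_mul_distrib, ← chi_sum,
      ← chi_sum] at e
    have e1 : (∏ i, if I i then chi (u i * z i) else 1) = chi ε := by
      simp only [ε]
      rw [chi_sum]
      refine Finset.prod_congr rfl fun i _ => ?_
      split_ifs
      · rfl
      · exact chi_zero.symm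
    rw [e1] at e
    have e' : had I a (b + u) * chi (z ⬝ᵥ b)
      = chi ε * (chi (z' ⬝ᵥ (a + u')) * had I (a + u') b) := e
    linear_combination c * e'
  rw [key, mul_assoc, had_mul_self, mul_one]
  exact ⟨c * chi ε, u', z', hc.chi _, by rw [XZ_eq, smul_mono]⟩

theorem semi_small {n : ℕ} (hn : n ≤ 6) (f : QV n ≃ QV n)
    (hf : permGate n f ∈ CliffordLevel n 3) : IsSemiClifford n (permGate n f) := by
  obtain ⟨α, s, β, I, q, hα, hβ, e, hs, h1, h2⟩ := exists_shear hn f hf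
  refine ⟨permGate n α * had I, Matrix.diagonal (fun b => chi (b ⬝ᵥ q b)), had I * permGate n β,
    clifford_mul (clifford_perm α hα) (had_clifford I),
    clifford_mul (had_clifford I) (clifford_perm β hβ), ?_, ?_⟩
  · intro a b hab
    exact Matrix.diagonal_apply_ne _ hab
  · have hh := had_shear I q h1 h2
    have : permGate n α * had I * Matrix.diagonal (fun b => chi (b ⬝ᵥ q b)) *
        (had I * permGate n β) = permGate n α *
        (had I * Matrix.diagonal (fun b => chi (b ⬝ᵥ q b)) * had I) * permGate n β := by
      simp only [mul_assoc]
    rw [this, hh, permGate_eq, permGate_eq, permGate_eq, mono_mul, mono_mul]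
    congr 1
    · funext v
      simp only [Function.comp, e, hs]
    · simp

end S18

/-- For every `n ≤ 6`, every permutation gate in `𝒞₃` on `n` qubits is
semi-Clifford, while on `7` qubits there is a permutation gate in `𝒞₃` that is not
semi-Clifford; so `7` is the smallest such number of qubits. -/
theorem stmt18 :
    (∀ n : ℕ, 1 ≤ n → n ≤ 6 → ∀ f : QV n ≃ QV n,
      permGate n f ∈ CliffordLevel n 3 → IsSemiClifford n (permGate n f)) ∧
    (∃ f : QV 7 ≃ QV 7,
      permGate 7 f ∈ CliffordLevel 7 3 ∧ ¬ IsSemiClifford 7 (permGate 7 f)) := by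
  exact ⟨fun n _ hn f hf => S18.semi_small hn f hf, S18.perm7, S18.perm7_mem, S18.perm7_not⟩
end
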